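/- Let α ∈ (1,2) and ρ ∈ (0,1) with ρ̂ := 1 - ρ, and assume αρ > 0 and αρ̂ > 0. Then for every λ > 0, ∫₀^∞ e^{-(λ+α-1)x} [ (e^x - 1)^{αρ-1} (e^x + 1)^{αρ̂} - (α-1) Φ̄(e^x) ] dx = Ψ(λ-1, αρ-1, αρ̂) - ((α-1)/(λ+α-1)) Ψ(λ-1, αρ-1, αρ̂-1). -/

import Mathlib

open MeasureTheory Real Set

/-- `Ψ(a,b,c) := ∫₀¹ u^a (1-u)^b (1+u)^c du`. -/
noncomputable def Psi (a b c : ℝ) : ℝ :=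
  ∫ u in Ioo (0:ℝ) 1, u ^ a * (1 - u) ^ b * (1 + u) ^ c

/-- `Φ̄(z) := ∫₁^z (t-1)^{αρ-1} (t+1)^{αρ̂-1} dt`, with `ρ̂ = 1 - ρ`. -/
noncomputable def PhiBar (α ρ : ℝ) (z : ℝ) : ℝ :=
  ∫ t in Ioc (1:ℝ) z, (t - 1) ^ (α * ρ - 1) * (t + 1) ^ (α * (1 - ρ) - 1)

/-!
The substitution `u = e^{-x}` identifies `Ψ(r - b - c - 1, b, c)` with the Laplace transform of
`(e^x - 1)^b (e^x + 1)^c` at `r`, which accounts for the first term of the integrand. For the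
second term, `e^{-sx} ∫₀ˣ h` is the convolution on `(0, ∞)` of `e^{-sy} h(y)` with `e^{-sy}`, so
taking a primitive divides the Laplace transform by `s`; the substitution `t = e^y` presents
`Φ̄(e^x)` as such a primitive, and its Jacobian `e^y` lowers the rate from `s` to `s - 1`.
-/

section ExponentialSubstitution

variable {E : Type*} [NormedAddCommGroup E] [NormedSpace ℝ E]

lemma image_exp_neg_Ioi (a : ℝ) : (fun x : ℝ ↦ exp (-x)) '' Ioi a = Ioo 0 (exp (-a)) := by
  rw [← image_exp_Iio, ← image_neg_Ioi, image_image]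

lemma integrableOn_comp_exp_neg_Ioi (g : ℝ → E) (a : ℝ) :
    IntegrableOn (fun x ↦ exp (-x) • g (exp (-x))) (Ioi a) ↔
      IntegrableOn g (Ioo 0 (exp (-a))) := by
  rw [← image_exp_neg_Ioi]
  simpa using (integrableOn_image_iff_integrableOn_deriv_smul_of_antitoneOn measurableSet_Ioi
    (fun x _ ↦ (hasDerivAt_neg x).exp.hasDerivWithinAt)
    (fun _ _ _ _ hxy ↦ exp_le_exp.2 (neg_le_neg hxy)) g).symm

lemma integral_comp_exp_neg_Ioi (g : ℝ → E) (a : ℝ) :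
    ∫ x in Ioi a, exp (-x) • g (exp (-x)) = ∫ u in Ioo 0 (exp (-a)), g u := by
  rw [← image_exp_neg_Ioi]
  simpa using (integral_image_eq_integral_deriv_smul_of_antitoneOn measurableSet_Ioi
    (fun x _ ↦ (hasDerivAt_neg x).exp.hasDerivWithinAt)
    (fun _ _ _ _ hxy ↦ exp_le_exp.2 (neg_le_neg hxy)) g).symm

end ExponentialSubstitution

section LaplaceTransformOfPrimitive

variable {E : Type*} [NormedAddCommGroup E] [NormedSpace ℝ E]

lemma indicator_exp_smul_primitive_eq_posConvolution (s : ℝ) (h : ℝ → E) :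
    (Ioi 0).indicator (fun x ↦ exp (-s * x) • ∫ y in (0 : ℝ)..x, h y) =
      posConvolution (fun y ↦ exp (-s * y) • h y) (fun x ↦ exp (-s * x))
        (ContinuousLinearMap.lsmul ℝ ℝ).flip := by
  refine indicator_congr fun x _ ↦ ?_
  rw [← intervalIntegral.integral_smul]
  refine intervalIntegral.integral_congr fun y _ ↦ ?_
  simp only [ContinuousLinearMap.flip_apply, ContinuousLinearMap.lsmul_apply, smul_smul, ← exp_add]
  ring_nf

variable {s : ℝ} {f h : ℝ → E}

lemma integrableOn_exp_smul_primitive (hs : 0 < s)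
    (hh : IntegrableOn (fun y ↦ exp (-s * y) • h y) (Ioi 0)) :
    IntegrableOn (fun x ↦ exp (-s * x) • ∫ y in (0 : ℝ)..x, h y) (Ioi 0) := by
  rw [← integrable_indicator_iff measurableSet_Ioi,
    indicator_exp_smul_primitive_eq_posConvolution]
  exact integrable_posConvolution hh (integrableOn_exp_mul_Ioi (neg_neg_of_pos hs) 0) _

lemma integral_exp_smul_primitive [CompleteSpace E] (hs : 0 < s)
    (hh : IntegrableOn (fun y ↦ exp (-s * y) • h y) (Ioi 0)) :
    ∫ x in Ioi 0, exp (-s * x) • ∫ y in (0 : ℝ)..x, h y =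
      s⁻¹ • ∫ y in Ioi 0, exp (-s * y) • h y := by
  have hexp : ∫ x in Ioi 0, exp (-s * x) = s⁻¹ := by
    rw [integral_exp_mul_Ioi (neg_neg_of_pos hs), mul_zero, exp_zero, neg_div_neg_eq, one_div]
  rw [← integral_indicator measurableSet_Ioi, indicator_exp_smul_primitive_eq_posConvolution,
    posConvolution, integral_indicator measurableSet_Ioi,
    integral_posConvolution hh (integrableOn_exp_mul_Ioi (neg_neg_of_pos hs) 0), hexp]
  rfl

lemma integral_one_exp (f : ℝ → E) (x : ℝ) :
    ∫ t in (1 : ℝ)..exp x, f t = ∫ y in (0 : ℝ)..x, exp y • f (exp y) := by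
  rw [← exp_zero]
  exact (intervalIntegral.integral_deriv_smul_comp_of_deriv_nonneg continuous_exp.continuousOn
    (fun y _ ↦ hasDerivAt_exp y) (fun y _ ↦ (exp_pos y).le)).symm

lemma exp_neg_mul_smul_exp_smul (s y : ℝ) (v : E) :
    exp (-s * y) • exp y • v = exp (-(s - 1) * y) • v := by
  rw [smul_smul, ← exp_add]
  ring_nf

lemma integrableOn_exp_smul_primitive_comp_exp (hs : 0 < s)
    (hf : IntegrableOn (fun y ↦ exp (-(s - 1) * y) • f (exp y)) (Ioi 0)) :
    IntegrableOn (fun x ↦ exp (-s * x) • ∫ t in (1 : ℝ)..exp x, f t) (Ioi 0) := by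
  simp only [← exp_neg_mul_smul_exp_smul] at hf
  simpa only [integral_one_exp] using integrableOn_exp_smul_primitive hs hf

lemma integral_exp_smul_primitive_comp_exp [CompleteSpace E] (hs : 0 < s)
    (hf : IntegrableOn (fun y ↦ exp (-(s - 1) * y) • f (exp y)) (Ioi 0)) :
    ∫ x in Ioi 0, exp (-s * x) • ∫ t in (1 : ℝ)..exp x, f t =
      s⁻¹ • ∫ y in Ioi 0, exp (-(s - 1) * y) • f (exp y) := by
  simp only [← exp_neg_mul_smul_exp_smul] at hf ⊢
  simpa only [integral_one_exp] using integral_exp_smul_primitive hs hf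

end LaplaceTransformOfPrimitive

lemma integrableOn_rpow_mul_one_sub_rpow {a b : ℝ} (ha : -1 < a) (hb : -1 < b) :
    IntegrableOn (fun u : ℝ ↦ u ^ a * (1 - u) ^ b) (Ioo 0 1) := by
  have hbeta := Complex.betaIntegral_convergent (u := (a + 1 : ℝ)) (v := (b + 1 : ℝ))
    (by rw [Complex.ofReal_re]; linarith) (by rw [Complex.ofReal_re]; linarith)
  rw [intervalIntegrable_iff_integrableOn_Ioo_of_le zero_le_one] at hbeta
  refine IntegrableOn.congr_fun hbeta.norm (fun u hu ↦ ?_) measurableSet_Ioo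
  have hsub : (1 : ℂ) - u = (1 - u : ℝ) := by push_cast; rfl
  simp [hsub, Complex.norm_cpow_eq_rpow_re_of_pos hu.1,
    Complex.norm_cpow_eq_rpow_re_of_pos (sub_pos.2 hu.2), -Complex.ofReal_sub]

section PsiAsLaplaceTransform

variable {b c r : ℝ}

lemma integrableOn_Psi_integrand {a : ℝ} (c : ℝ) (ha : -1 < a) (hb : -1 < b) :
    IntegrableOn (fun u : ℝ ↦ u ^ a * (1 - u) ^ b * (1 + u) ^ c) (Ioo 0 1) := by
  refine (integrableOn_rpow_mul_one_sub_rpow ha hb).mul_continuousOn_of_subset ?_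
    measurableSet_Ioo isCompact_Icc Ioo_subset_Icc_self
  exact ContinuousOn.rpow_const (by fun_prop) fun u hu ↦ .inl (by linarith [hu.1])

lemma exp_neg_smul_Psi_integrand_exp_neg (r b c : ℝ) {x : ℝ} (hx : 0 < x) :
    exp (-x) • (exp (-x) ^ (r - b - c - 1) * (1 - exp (-x)) ^ b * (1 + exp (-x)) ^ c) =
      exp (-r * x) * ((exp x - 1) ^ b * (exp x + 1) ^ c) := by
  have hlt : 0 < 1 - exp (-x) := by simpa using hx
  have hsub : exp x - 1 = exp x * (1 - exp (-x)) := by simp [mul_sub, ← exp_add]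
  have hadd : exp x + 1 = exp x * (1 + exp (-x)) := by simp [mul_add, ← exp_add]
  have hexp : exp (-r * x) * (exp x ^ b * exp x ^ c) =
      exp (-x) * exp (-x) ^ (r - b - c - 1) := by
    simp only [← exp_mul, ← exp_add]
    ring_nf
  rw [hsub, hadd, mul_rpow (exp_pos x).le hlt.le, mul_rpow (exp_pos x).le (by positivity),
    smul_eq_mul]
  linear_combination -(1 - exp (-x)) ^ b * (1 + exp (-x)) ^ c * hexp

lemma integrableOn_exp_mul_exp_sub_one_rpow_mul_exp_add_one_rpow (hb : -1 < b) (hr : b + c < r) :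
    IntegrableOn (fun x ↦ exp (-r * x) * ((exp x - 1) ^ b * (exp x + 1) ^ c)) (Ioi 0) := by
  have hsubst :=
    integrableOn_comp_exp_neg_Ioi (fun u ↦ u ^ (r - b - c - 1) * (1 - u) ^ b * (1 + u) ^ c) 0
  rw [neg_zero, exp_zero] at hsubst
  exact (hsubst.2 (integrableOn_Psi_integrand c (by linarith) hb)).congr_fun
    (fun x hx ↦ exp_neg_smul_Psi_integrand_exp_neg r b c hx) measurableSet_Ioi

lemma integral_exp_mul_exp_sub_one_rpow_mul_exp_add_one_rpow (r b c : ℝ) :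
    ∫ x in Ioi 0, exp (-r * x) * ((exp x - 1) ^ b * (exp x + 1) ^ c) =
      Psi (r - b - c - 1) b c := by
  have hsubst :=
    integral_comp_exp_neg_Ioi (fun u ↦ u ^ (r - b - c - 1) * (1 - u) ^ b * (1 + u) ^ c) 0
  rw [neg_zero, exp_zero] at hsubst
  rw [Psi, ← hsubst]
  exact setIntegral_congr_fun measurableSet_Ioi fun x hx ↦
    (exp_neg_smul_Psi_integrand_exp_neg r b c hx).symm

end PsiAsLaplaceTransform

section PhiBar

variable {α ρ s : ℝ}

lemma PhiBar_eq_intervalIntegral (α ρ : ℝ) {z : ℝ} (hz : 1 ≤ z) :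
    PhiBar α ρ z = ∫ t in (1 : ℝ)..z, (t - 1) ^ (α * ρ - 1) * (t + 1) ^ (α * (1 - ρ) - 1) :=
  (intervalIntegral.integral_of_le hz).symm

lemma eqOn_exp_mul_PhiBar_exp (α ρ s : ℝ) :
    EqOn (fun x ↦ exp (-s * x) * PhiBar α ρ (exp x))
      (fun x ↦ exp (-s * x) •
        ∫ t in (1 : ℝ)..exp x, (t - 1) ^ (α * ρ - 1) * (t + 1) ^ (α * (1 - ρ) - 1)) (Ioi 0) :=
  fun x (hx : 0 < x) ↦ by
    simp only [PhiBar_eq_intervalIntegral α ρ (one_le_exp hx.le), smul_eq_mul]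

lemma integrableOn_exp_mul_PhiBar_exp (hαρ : 0 < α * ρ) (hs : 0 < s) (hαs : α - 1 < s) :
    IntegrableOn (fun x ↦ exp (-s * x) * PhiBar α ρ (exp x)) (Ioi 0) := by
  refine (integrableOn_congr_fun (eqOn_exp_mul_PhiBar_exp α ρ s) measurableSet_Ioi).2 ?_
  exact integrableOn_exp_smul_primitive_comp_exp hs
    (integrableOn_exp_mul_exp_sub_one_rpow_mul_exp_add_one_rpow (by linarith) (by linarith))

lemma integral_exp_mul_PhiBar_exp (hαρ : 0 < α * ρ) (hs : 0 < s) (hαs : α - 1 < s) :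
    ∫ x in Ioi 0, exp (-s * x) * PhiBar α ρ (exp x) =
      s⁻¹ * Psi (s - α) (α * ρ - 1) (α * (1 - ρ) - 1) := by
  have hindex : s - α = s - 1 - (α * ρ - 1) - (α * (1 - ρ) - 1) - 1 := by ring
  rw [setIntegral_congr_fun measurableSet_Ioi (eqOn_exp_mul_PhiBar_exp α ρ s), hindex,
    ← integral_exp_mul_exp_sub_one_rpow_mul_exp_add_one_rpow]
  exact integral_exp_smul_primitive_comp_exp hs
    (integrableOn_exp_mul_exp_sub_one_rpow_mul_exp_add_one_rpow (by linarith) (by linarith))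

end PhiBar

theorem stmt_3_general (α ρ l : ℝ) (hαρ : 0 < α * ρ) (hl : 0 < l) (hs : 0 < l + α - 1) :
    ∫ x in Ioi 0, exp (-(l + α - 1) * x) *
        ((exp x - 1) ^ (α * ρ - 1) * (exp x + 1) ^ (α * (1 - ρ)) - (α - 1) * PhiBar α ρ (exp x)) =
      Psi (l - 1) (α * ρ - 1) (α * (1 - ρ)) -
        (α - 1) / (l + α - 1) * Psi (l - 1) (α * ρ - 1) (α * (1 - ρ) - 1) := by
  have hpower := integrableOn_exp_mul_exp_sub_one_rpow_mul_exp_add_one_rpow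
    (b := α * ρ - 1) (c := α * (1 - ρ)) (r := l + α - 1) (by linarith) (by linarith)
  have hPhiBar := integrableOn_exp_mul_PhiBar_exp hαρ hs (by linarith)
  have hpower_index : l + α - 1 - (α * ρ - 1) - α * (1 - ρ) - 1 = l - 1 := by ring
  have hPhiBar_index : l + α - 1 - α = l - 1 := by ring
  simp only [mul_sub (exp _), mul_left_comm _ (α - 1)]
  rw [integral_sub hpower (hPhiBar.const_mul _), integral_const_mul,
    integral_exp_mul_exp_sub_one_rpow_mul_exp_add_one_rpow, hpower_index,
    integral_exp_mul_PhiBar_exp hαρ hs (by linarith), hPhiBar_index, div_eq_mul_inv, mul_assoc]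

theorem stmt_3 (α ρ : ℝ) (hα : α ∈ Ioo (1:ℝ) 2) (hρ : ρ ∈ Ioo (0:ℝ) 1)
    (hαρ : 0 < α * ρ) (hαρ' : 0 < α * (1 - ρ)) (l : ℝ) (hl : 0 < l) :
    (∫ x in Ioi (0:ℝ),
        Real.exp (-(l + α - 1) * x) *
          ((Real.exp x - 1) ^ (α * ρ - 1) * (Real.exp x + 1) ^ (α * (1 - ρ))
            - (α - 1) * PhiBar α ρ (Real.exp x)))
      = Psi (l - 1) (α * ρ - 1) (α * (1 - ρ))
        - ((α - 1) / (l + α - 1)) * Psi (l - 1) (α * ρ - 1) (α * (1 - ρ) - 1) :=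
  stmt_3_general α ρ l hαρ hl (by linarith [hα.1])
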